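/- The ℂ-linear span of the one hundred functions θ⁴[δᵢ]θ⁸[δⱼ], where δᵢ and δⱼ independently range over the ten even characteristics, has dimension exactly 34. -/

import Mathlib

open scoped BigOperators

namespace TwoLoop

/-- 2×2 complex matrices. -/
abbrev Mat2 := Matrix (Fin 2) (Fin 2) ℂ

/-- The genus-2 Siegel upper half space: symmetric 2×2 complex matrices with
positive definite imaginary part. -/
def SiegelH2 : Set Mat2 := {τ | τ.transpose = τ ∧ (τ.map Complex.im).PosDef}

/-- A (half-integer) theta characteristic `[a;b]`, recorded by its rows `a, b ∈ {0,1}²`. -/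
abbrev Char := (Fin 2 → ℤ) × (Fin 2 → ℤ)

/-- The theta constant `θ[a;b](τ) = Σ_{n ∈ ℤ²} exp(πi (n+a/2)ᵀ τ (n+a/2) + πi (n+a/2)·b)`. -/
noncomputable def theta (κ : Char) (τ : Mat2) : ℂ :=
  ∑' n : Fin 2 → ℤ,
    Complex.exp ((Real.pi : ℂ) * Complex.I *
      ((∑ i, ∑ j, ((n i : ℂ) + (κ.1 i : ℂ) / 2) * τ i j * ((n j : ℂ) + (κ.1 j : ℂ) / 2))
        + ∑ i, ((n i : ℂ) + (κ.1 i : ℂ) / 2) * (κ.2 i : ℂ)))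

/-- The ten even characteristics δ₁,…,δ₁₀. -/
def δev : Fin 10 → Char :=
  ![(![0,0], ![0,0]), (![0,0], ![0,1]), (![0,0], ![1,0]), (![0,0], ![1,1]),
    (![0,1], ![0,0]), (![0,1], ![1,0]), (![1,0], ![0,0]), (![1,0], ![0,1]),
    (![1,1], ![0,0]), (![1,1], ![1,1])]

/-- The six odd characteristics ν₁,…,ν₆. -/
def νodd : Fin 6 → Char :=
  ![(![0,1], ![0,1]), (![1,0], ![1,0]), (![0,1], ![1,1]),
    (![1,0], ![1,1]), (![1,1], ![0,1]), (![1,1], ![1,0])]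

/-- `Θ[ε](τ) = θ[ε;0](2τ)`. -/
noncomputable def Θf (ε : Fin 2 → ℤ) (τ : Mat2) : ℂ := theta (ε, ![0,0]) ((2 : ℂ) • τ)

noncomputable def P0 (τ : Mat2) : ℂ :=
  Θf ![0,0] τ ^ 4 + Θf ![0,1] τ ^ 4 + Θf ![1,0] τ ^ 4 + Θf ![1,1] τ ^ 4
noncomputable def P1 (τ : Mat2) : ℂ :=
  2 * (Θf ![0,0] τ ^ 2 * Θf ![0,1] τ ^ 2 + Θf ![1,0] τ ^ 2 * Θf ![1,1] τ ^ 2)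
noncomputable def P2 (τ : Mat2) : ℂ :=
  2 * (Θf ![0,0] τ ^ 2 * Θf ![1,0] τ ^ 2 + Θf ![0,1] τ ^ 2 * Θf ![1,1] τ ^ 2)
noncomputable def P3 (τ : Mat2) : ℂ :=
  2 * (Θf ![0,0] τ ^ 2 * Θf ![1,1] τ ^ 2 + Θf ![0,1] τ ^ 2 * Θf ![1,0] τ ^ 2)
noncomputable def P4 (τ : Mat2) : ℂ :=
  4 * (Θf ![0,0] τ * Θf ![0,1] τ * Θf ![1,0] τ * Θf ![1,1] τ)

/-- The vector `(P₀,…,P₄)`. -/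
noncomputable def Pv : Fin 5 → Mat2 → ℂ := ![P0, P1, P2, P3, P4]

open MvPolynomial in
/-- The Igusa quartic as a polynomial in `x₀,…,x₄`. -/
noncomputable def I4poly : MvPolynomial (Fin 5) ℂ :=
  X 4 ^ 4 + X 4 ^ 2 * X 0 ^ 2 - X 4 ^ 2 * X 1 ^ 2 - X 4 ^ 2 * X 2 ^ 2 - X 4 ^ 2 * X 3 ^ 2
    + X 1 ^ 2 * X 2 ^ 2 + X 1 ^ 2 * X 3 ^ 2 + X 2 ^ 2 * X 3 ^ 2
    - 2 * (X 0 * X 1 * X 2 * X 3)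

/-- The signature `⟨κ|λ⟩ = exp(πi(a_κ·b_λ − b_κ·a_λ))`. -/
noncomputable def sig (κ lam : Char) : ℂ :=
  Complex.exp ((Real.pi : ℂ) * Complex.I *
    (((∑ i, κ.1 i * lam.2 i : ℤ) : ℂ) - ((∑ i, κ.2 i * lam.1 i : ℤ) : ℂ)))

/-- Componentwise mod-2 sum of characteristics. -/
def addChar (κ lam : Char) : Char :=
  (fun i => (κ.1 i + lam.1 i) % 2, fun i => (κ.2 i + lam.2 i) % 2)

/-- For each even characteristic `δ_d`, the ordering `(k₁,…,k₆)` of `{1,…,6}` (0-indexed) whose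
first three entries form the triad of odd characteristics with `δ_d = ν_{k₁}+ν_{k₂}+ν_{k₃}`
and whose last three are the complementary indices. -/
def triad : Fin 10 → Fin 6 → Fin 6 :=
  ![![0,3,5,1,2,4], ![0,1,5,2,3,4], ![0,1,4,2,3,5], ![0,3,4,1,2,5], ![0,1,3,2,4,5],
    ![0,4,5,1,2,3], ![0,1,2,3,4,5], ![0,2,3,1,4,5], ![0,2,5,1,3,4], ![0,2,4,1,3,5]]

/-- D'Hoker–Phong's `Ξ₆[δ]`. -/
noncomputable def Xi6 (d : Fin 10) (τ : Mat2) : ℂ :=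
  ∑ i : Fin 3, ∑ j : Fin 3,
    if i < j then
      sig (νodd (triad d (Fin.castLE (by norm_num) i))) (νodd (triad d (Fin.castLE (by norm_num) j))) *
        ∏ m : Fin 3,
          theta (addChar (addChar (νodd (triad d (Fin.castLE (by norm_num) i)))
              (νodd (triad d (Fin.castLE (by norm_num) j))))
            (νodd (triad d (⟨m.1 + 3, by omega⟩ : Fin 6)))) τ ^ 4
    else 0

/-- The formal derivative `∂I₄/∂θ⁴[δ]` of the Igusa quartic with respect to the ten fourth
powers of the even theta constants, regarded as independent variables. -/
noncomputable def Dd (d : Fin 10) (τ : Mat2) : ℂ :=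
  (1 / 48 : ℂ) *
    (theta (δev d) τ ^ 4 * (∑ d' : Fin 10, theta (δev d') τ ^ 8) - 4 * theta (δev d) τ ^ 12)

/-- `f_δ = 2Ξ₆[δ] − ∂I₄/∂θ⁴[δ]`. -/
noncomputable def fδ (d : Fin 10) (τ : Mat2) : ℂ := 2 * Xi6 d τ - Dd d τ

/-- `Ψ₆`, the weight-6 modular form. -/
noncomputable def Ψ6 (τ : Mat2) : ℂ :=
  P0 τ ^ 3 - 9 * P0 τ * (P1 τ ^ 2 + P2 τ ^ 2 + P3 τ ^ 2 - 4 * P4 τ ^ 2)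
    + 54 * (P1 τ * P2 τ * P3 τ)

/-- `Ψ₁₀`, the weight-10 modular form. -/
noncomputable def Ψ10 (τ : Mat2) : ℂ := ∏ d : Fin 10, theta (δev d) τ ^ 2

/-- A characteristic is even when `a·b` is even. -/
def IsEvenChar (κ : Char) : Prop := (∑ i, κ.1 i * κ.2 i) % 2 = 0

/-- A characteristic is odd when `a·b` is odd. -/
def IsOddChar (κ : Char) : Prop := (∑ i, κ.1 i * κ.2 i) % 2 = 1

/-!
By Riemann's bilinear relations the `θ⁴[δᵢ]` are linear forms in five functions `P₀, …, P₄`, so the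
`θ⁴[δᵢ]θ⁸[δⱼ]` are cubic forms in them, and a space of cubic forms in five variables has dimension
at most `35`. In suitable coordinates `z` every `θ⁴[δ]` has values `±1` at six points, the five
basis vectors and minus their sum, three of each sign. Hence `θ⁴[δᵢ]θ⁸[δⱼ]` has the same values as
`θ⁴[δᵢ]` there, and these add up to `0`: a nonzero functional kills all hundred cubics, so their
span has dimension at most `34`.

Conversely the `θ⁸[δⱼ]` span all `4 z_a z_b - ∑ z_d²` with `a ≠ b`. Modulo the multiples of these by
the `z_c`, the element `z_c ∑ z_d²` does not depend on `c`, every mixed cubic monomial is a quarter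
of it, and the cubes vanish; so the hundred functions have codimension at most one in the space of
cubics in the `z_a`.

This last space does have dimension `35`: the leading exponents of the second order theta constants
at a cusp can be chosen so that the cubic monomials in `P₀, …, P₄` have different orders of
vanishing there, up to the single coincidence between `P₁P₂P₃` and `P₀P₄²`, which the Igusa quartic
resolves.
-/

/-! ### Cubics modulo quadratic relations -/

section CubicRelations

variable {K A B σ : Type*} [Field K] [CommRing A] [Algebra K A] [AddCommGroup B] [Module K B]
  [Fintype σ]

/-- On products of three of the `z a`, the linear map `f` respects the quadratic relations
`(n - 1) z_a z_b = ∑ z_d²` for `a ≠ b`, where `n` is the number of indices. -/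
def RespectsRelations (f : A →ₗ[K] B) (z : σ → A) : Prop :=
  ∀ a b c, a ≠ b → f (z c * (((Fintype.card σ : K) - 1) • (z a * z b) - ∑ d, z d ^ 2)) = 0

variable {f : A →ₗ[K] B} {z : σ → A}

lemma smul_map_mul_mul_eq (hf : RespectsRelations f z) {a b : σ} (hab : a ≠ b) (c : σ) :
    ((Fintype.card σ : K) - 1) • f (z a * z b * z c) = f (z c * ∑ d, z d ^ 2) := by
  rw [← map_smul, ← sub_eq_zero, ← map_sub, ← hf a b c hab, mul_sub, mul_smul_comm,
    mul_comm (z c) (z a * z b)]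

lemma map_mul_sum_sq_eq (hf : RespectsRelations f z) (hσ : 3 ≤ Fintype.card σ) (a c : σ) :
    f (z a * ∑ d, z d ^ 2) = f (z c * ∑ d, z d ^ 2) := by
  classical
  obtain ⟨b, hb⟩ : ∃ b, b ∉ ({a, c} : Finset σ) := by
    by_contra! h
    have h_card := Finset.card_le_two (a := a) (b := c)
    rw [Finset.eq_univ_of_forall h, Finset.card_univ] at h_card
    omega
  simp only [Finset.mem_insert, Finset.mem_singleton, not_or] at hb
  rw [← smul_map_mul_mul_eq hf hb.2, ← smul_map_mul_mul_eq hf hb.1, mul_right_comm]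

lemma map_pow_three_eq_zero (hf : RespectsRelations f z) (hσ : 3 ≤ Fintype.card σ)
    (hK : (Fintype.card σ : K) - 1 ≠ 0) (a : σ) : f (z a ^ 3) = 0 := by
  classical
  set n : K := (Fintype.card σ : K) - 1
  have h_split : n • f (z a * ∑ d, z d ^ 2) =
      n • f (z a ^ 3) + ∑ d ∈ Finset.univ.erase a, n • f (z a * z d * z d) := by
    rw [← Finset.smul_sum, ← smul_add, ← map_sum, ← map_add, pow_three', Finset.mul_sum,
      Finset.add_sum_erase _ (fun d => z a * z d * z d) (Finset.mem_univ a)]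
    simp only [pow_two, mul_assoc]
  have h_rest : ∑ d ∈ Finset.univ.erase a, n • f (z a * z d * z d) =
      n • f (z a * ∑ d, z d ^ 2) := by
    rw [Finset.sum_congr rfl fun d hd =>
        (smul_map_mul_mul_eq hf (Finset.ne_of_mem_erase hd).symm d).trans
          (map_mul_sum_sq_eq hf hσ d a),
      Finset.sum_const, Finset.card_erase_of_mem (Finset.mem_univ a), Finset.card_univ,
      ← Nat.cast_smul_eq_nsmul K, Nat.cast_sub (by omega), Nat.cast_one]
  rw [h_rest, right_eq_add, smul_eq_zero] at h_split
  exact h_split.resolve_left hK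

lemma map_mul_mul_mem_span_singleton (hf : RespectsRelations f z) (hσ : 3 ≤ Fintype.card σ)
    (hK : (Fintype.card σ : K) - 1 ≠ 0) (o a b c : σ) :
    f (z a * z b * z c) ∈ Submodule.span K {f (z o * ∑ d, z d ^ 2)} := by
  have h_mixed {a b : σ} (hab : a ≠ b) (c : σ) :
      f (z a * z b * z c) ∈ Submodule.span K {f (z o * ∑ d, z d ^ 2)} := by
    rw [← Submodule.smul_mem_iff _ hK, smul_map_mul_mul_eq hf hab, map_mul_sum_sq_eq hf hσ c o]
    exact Submodule.mem_span_singleton_self _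
  rcases eq_or_ne a b with rfl | hab
  · rcases eq_or_ne a c with rfl | hac
    · rw [← pow_three', map_pow_three_eq_zero hf hσ hK]
      exact zero_mem _
    · rw [mul_right_comm]
      exact h_mixed hac a
  · exact h_mixed hab c

end CubicRelations

lemma exists_span_range_pow_three_le_sup {K A σ : Type*} [Field K] [CommRing A] [Algebra K A]
    [Fintype σ] (hσ : 3 ≤ Fintype.card σ) (hK : (Fintype.card σ : K) - 1 ≠ 0) {z : σ → A}
    {M : Submodule K A}
    (hM : ∀ a b c, a ≠ b →
      z c * (((Fintype.card σ : K) - 1) • (z a * z b) - ∑ d, z d ^ 2) ∈ M) :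
    ∃ r : A, Submodule.span K (Set.range z) ^ 3 ≤ M ⊔ Submodule.span K {r} := by
  obtain ⟨o⟩ : Nonempty σ := Fintype.card_pos_iff.mp (by omega)
  refine ⟨z o * ∑ d, z d ^ 2, ?_⟩
  rw [pow_three', Submodule.span_mul_span, Submodule.span_mul_span, Submodule.span_le]
  rintro _ ⟨_, ⟨_, ⟨a, rfl⟩, _, ⟨b, rfl⟩, rfl⟩, _, ⟨c, rfl⟩, rfl⟩
  rw [SetLike.mem_coe, ← Submodule.comap_map_mkQ, Submodule.mem_comap, Submodule.map_span,
    Set.image_singleton]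
  exact map_mul_mul_mem_span_singleton
    (fun a b c hab => (Submodule.Quotient.mk_eq_zero M).mpr (hM a b c hab)) hσ hK o a b c

lemma finrank_homogeneousSubmodule {σ R : Type*} [Fintype σ] [CommRing R] [Nontrivial R]
    (d : ℕ) :
    Module.finrank R (MvPolynomial.homogeneousSubmodule σ R d) =
      (Fintype.card σ).multichoose d := by
  classical
  have h_exponents :
      {m : σ →₀ ℕ | m.degree = d} = (Finset.univ.finsuppAntidiag d : Finset (σ →₀ ℕ)) := by
    ext m
    simp [Finsupp.degree_eq_sum]
  rw [MvPolynomial.homogeneousSubmodule_eq_finsupp_supported, h_exponents,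
    (AddMonoidAlgebra.supportedEquivFinsupp _).finrank_eq]
  simp [Module.finrank_finsupp_self, Finset.card_finsuppAntidiag_nat_eq_multichoose]

lemma multiset_prod_mem_pow_card {R A : Type*} [CommSemiring R] [CommSemiring A] [Algebra R A]
    {M : Submodule R A} {s : Multiset A} (hs : ∀ x ∈ s, x ∈ M) : s.prod ∈ M ^ s.card := by
  induction s using Multiset.induction_on with
  | empty =>
    rw [Multiset.prod_zero, Multiset.card_zero, pow_zero]
    exact Submodule.one_le.mp le_rfl
  | cons x s ih =>
    rw [Multiset.prod_cons, Multiset.card_cons, pow_succ']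
    exact Submodule.mul_mem_mul (hs x (Multiset.mem_cons_self x s))
      (ih fun y hy => hs y (Multiset.mem_cons_of_mem hy))

lemma finrank_span_range_aeval_lt {K A σ ι : Type*} [Field K] [CommRing A] [Algebra K A]
    [Fintype σ] {d : ℕ} (z : σ → A) {F : ι → MvPolynomial σ K} (hF : ∀ i, (F i).IsHomogeneous d)
    {L : MvPolynomial σ K →ₗ[K] K} (hL : ∀ i, L (F i) = 0) {g : MvPolynomial σ K}
    (hg : g.IsHomogeneous d) (hLg : L g ≠ 0) :
    Module.finrank K (Submodule.span K (Set.range fun i => MvPolynomial.aeval z (F i))) <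
      (Fintype.card σ).multichoose d := by
  have : Module.Finite K (MvPolynomial.homogeneousSubmodule σ K d) :=
    Module.Finite.iff_fg.mpr (MvPolynomial.homogeneousSubmodule_fg σ K d)
  have h_ne : L.domRestrict (MvPolynomial.homogeneousSubmodule σ K d) ≠ 0 := fun h =>
    hLg (LinearMap.congr_fun h ⟨g, hg⟩)
  have h_le : Submodule.span K (Set.range fun i => MvPolynomial.aeval z (F i)) ≤
      (LinearMap.ker (L.domRestrict (MvPolynomial.homogeneousSubmodule σ K d))).map
        ((MvPolynomial.aeval z).toLinearMap ∘ₗ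
          (MvPolynomial.homogeneousSubmodule σ K d).subtype) := by
    rw [Submodule.span_le]
    rintro _ ⟨i, rfl⟩
    exact ⟨⟨F i, hF i⟩, hL i, rfl⟩
  rw [← finrank_homogeneousSubmodule (R := K), ← Module.Dual.finrank_ker_add_one_of_ne_zero h_ne,
    Nat.lt_succ_iff]
  exact (Submodule.finrank_mono h_le).trans (Submodule.finrank_map_le _ _)

lemma sum_smul_sum_smul_sq {R A ι σ : Type*} [CommSemiring R] [CommSemiring A] [Algebra R A]
    [Fintype ι] [Fintype σ] (c : ι → R) (s : ι → σ → R) (z : σ → A) :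
    ∑ i, c i • (∑ d, s i d • z d) ^ 2 =
      ∑ d, ∑ e, (∑ i, c i * (s i d * s i e)) • (z d * z e) := calc
  _ = ∑ i, ∑ d, ∑ e, (c i * (s i d * s i e)) • (z d * z e) := by
    simp only [pow_two, Finset.sum_mul_sum, smul_mul_smul_comm, Finset.smul_sum, smul_smul]
  _ = ∑ d, ∑ e, ∑ i, (c i * (s i d * s i e)) • (z d * z e) :=
    Finset.sum_comm.trans (Finset.sum_congr rfl fun _ _ => Finset.sum_comm)
  _ = _ := by simp only [Finset.sum_smul]

/-! ### Orders of vanishing -/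

section Asymptotics

open Asymptotics Filter Topology

lemma isTheta_mul_pow {α 𝕜 𝕜' : Type*} [NormedField 𝕜] [NormedField 𝕜'] {l : Filter α}
    {q : α → 𝕜'} {f g : α → 𝕜} {m n : ℕ} (hf : f =Θ[l] fun x => q x ^ m)
    (hg : g =Θ[l] fun x => q x ^ n) :
    (fun x => f x * g x) =Θ[l] fun x => q x ^ (m + n) := by
  simpa only [pow_add] using hf.mul hg

lemma isTheta_pow_pow {α 𝕜 𝕜' : Type*} [NormedField 𝕜] [NormedField 𝕜'] {l : Filter α}
    {q : α → 𝕜'} {f : α → 𝕜} {m : ℕ} (hf : f =Θ[l] fun x => q x ^ m) (k : ℕ) :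
    (fun x => f x ^ k) =Θ[l] fun x => q x ^ (m * k) := by
  simpa only [pow_mul] using hf.pow k

lemma isTheta_add_of_isBigO_pow {α E 𝕜 : Type*} [SeminormedAddCommGroup E] [NormedField 𝕜]
    {l : Filter α} {q : α → 𝕜} (hq : Tendsto q l (𝓝 0)) {f g : α → E} {m n : ℕ}
    (hf : f =Θ[l] fun x => q x ^ m) (hg : g =O[l] fun x => q x ^ n) (hmn : m < n) :
    (fun x => f x + g x) =Θ[l] fun x => q x ^ m :=
  hf.add_isLittleO (hg.trans_isLittleO ((isLittleO_pow_pow hmn).comp_tendsto hq))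

lemma linearIndependent_of_isLittleO {ι κ α 𝕜 : Type*} [LinearOrder κ] [NormedField 𝕜]
    {l : Filter α} {f : ι → α → 𝕜} {w : ι → κ} (hw : Function.Injective w)
    (hf : ∀ i j, w i < w j → f j =o[l] f i) (hf₀ : ∀ i, ∃ᶠ x in l, f i x ≠ 0) :
    LinearIndependent 𝕜 f := by
  classical
  rw [linearIndependent_iff']
  intro s c h_sum
  by_contra! h
  obtain ⟨i, hi, h_min⟩ := (s.filter (c · ≠ 0)).exists_min_image w
    (by simpa only [Finset.filter_nonempty_iff] using h)
  rw [Finset.mem_filter] at hi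
  have h_rest : (∑ j ∈ s.erase i, c j • f j) =o[l] f i := by
    refine (IsLittleO.sum (s := s.erase i) (A := fun j x => c j * f j x) fun j hj => ?_).congr_left
      fun x => by simp only [Finset.sum_apply, Pi.smul_apply, smul_eq_mul]
    by_cases hcj : c j = 0
    · simpa only [hcj, zero_mul] using isLittleO_zero (f i) l
    have h_le := h_min j (Finset.mem_filter.mpr ⟨Finset.mem_of_mem_erase hj, hcj⟩)
    exact (hf i j (h_le.lt_of_ne fun h => Finset.ne_of_mem_erase hj (hw h.symm))).const_mul_left _
  rw [← Finset.add_sum_erase _ _ hi.1, add_eq_zero_iff_neg_eq] at h_sum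
  rw [← h_sum] at h_rest
  exact isLittleO_irrefl (hf₀ i)
    ((isLittleO_const_mul_left_iff hi.2).mp (isLittleO_neg_left.mp h_rest))

lemma linearIndependent_of_isTheta_pow {ι α 𝕜 𝕜' : Type*} [NormedField 𝕜] [NormedField 𝕜']
    {l : Filter α} [l.NeBot] {q : α → 𝕜'} (hq : Tendsto q l (𝓝[≠] 0)) {f : ι → α → 𝕜}
    {w : ι → ℕ} (hw : Function.Injective w) (hf : ∀ i, f i =Θ[l] fun x => q x ^ w i) :
    LinearIndependent 𝕜 f := by
  rw [tendsto_nhdsWithin_iff] at hq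
  refine linearIndependent_of_isLittleO (l := l) hw (fun i j hij => ?_) fun i => ?_
  · exact (hf j).trans_isLittleO
      (((isLittleO_pow_pow hij).comp_tendsto hq.1).trans_isTheta (hf i).symm)
  · refine Eventually.frequently ?_
    filter_upwards [(hf i).eq_zero_iff, hq.2] with x hx hqx hfx
    exact pow_ne_zero _ hqx (hx.mp hfx)

lemma isTheta_tsum_exp_neg_mul {ι : Type*} {c : ι → ℝ} (hc : Summable fun i => Real.exp (-c i))
    {i₀ : ι} (h_min : ∀ i, c i₀ ≤ c i) :
    (fun t : ℝ => ∑' i, Real.exp (-(t * c i))) =Θ[atTop] fun t => Real.exp (-(t * c i₀)) := by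
  have h_le {t : ℝ} (ht : 1 ≤ t) (i : ι) :
      Real.exp (-(t * c i)) ≤ Real.exp (-(t * c i₀)) * Real.exp (c i₀) * Real.exp (-c i) := by
    rw [← Real.exp_add, ← Real.exp_add, Real.exp_le_exp]
    nlinarith [h_min i]
  have h_summable {t : ℝ} (ht : 1 ≤ t) : Summable fun i => Real.exp (-(t * c i)) :=
    (hc.mul_left _).of_nonneg_of_le (fun _ => (Real.exp_pos _).le) (h_le ht)
  constructor
  · refine IsBigO.of_bound (Real.exp (c i₀) * ∑' i, Real.exp (-c i)) ?_
    filter_upwards [eventually_ge_atTop 1] with t ht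
    rw [Real.norm_of_nonneg (tsum_nonneg fun _ => (Real.exp_pos _).le), Real.norm_eq_abs,
      Real.abs_exp, mul_comm, ← mul_assoc, ← tsum_mul_left]
    exact (h_summable ht).tsum_le_tsum (h_le ht) (hc.mul_left _)
  · refine IsBigO.of_bound 1 ?_
    filter_upwards [eventually_ge_atTop 1] with t ht
    rw [one_mul, Real.norm_eq_abs, Real.abs_exp]
    exact ((h_summable ht).le_tsum i₀ fun _ _ => (Real.exp_pos _).le).trans (Real.le_norm_self _)

end Asymptotics

/-! ### Products of theta series -/

/-- The term `exp(πi/4 · kᵀτk + πi/2 · k·b)`: the series `θ[a;b](τ)` is its sum over the vectors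
`k ≡ a` mod 2, i.e. over `k = 2n + a`. -/
noncomputable def thetaTerm (b : Fin 2 → ℤ) (τ : Mat2) (k : Fin 2 → ℤ) : ℂ :=
  Complex.exp ((Real.pi : ℂ) * Complex.I / 4 * ∑ i, ∑ j, (k i : ℂ) * τ i j * (k j : ℂ)
    + (Real.pi : ℂ) * Complex.I / 2 * ∑ i, (k i : ℂ) * (b i : ℂ))

lemma theta_eq_tsum_thetaTerm (a b : Fin 2 → ℤ) (τ : Mat2) :
    theta (a, b) τ = ∑' n : Fin 2 → ℤ, thetaTerm b τ ((2 : ℤ) • n + a) := by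
  refine tsum_congr fun n => congrArg Complex.exp ?_
  simp only [Fin.sum_univ_two, Pi.add_apply, Pi.smul_apply, smul_eq_mul]
  push_cast
  ring

lemma Θf_eq_tsum_thetaTerm (ε : Fin 2 → ℤ) (τ : Mat2) :
    Θf ε τ = ∑' n : Fin 2 → ℤ, thetaTerm 0 ((2 : ℂ) • τ) ((2 : ℤ) • n + ε) := by
  rw [Θf, theta_eq_tsum_thetaTerm, show (![0, 0] : Fin 2 → ℤ) = 0 from by simp]

lemma Θf_congr_of_modEq {ε ε' : Fin 2 → ℤ} (h : ∀ i, ε i ≡ ε' i [ZMOD 2]) (τ : Mat2) :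
    Θf ε τ = Θf ε' τ := by
  choose m hm using fun i => (h i).dvd
  rw [Θf_eq_tsum_thetaTerm, Θf_eq_tsum_thetaTerm, ← (Equiv.addRight m).tsum_eq]
  refine tsum_congr fun n => congrArg _ (funext fun i => ?_)
  have := hm i
  simp only [Pi.add_apply, Pi.smul_apply, Equiv.coe_addRight, smul_eq_mul]
  linarith

lemma norm_thetaTerm (b : Fin 2 → ℤ) (τ : Mat2) (k : Fin 2 → ℤ) :
    ‖thetaTerm b τ k‖ =
      Real.exp (-(Real.pi / 4) * ∑ i, ∑ j, (k i : ℝ) * (τ i j).im * (k j : ℝ)) := by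
  have h_exponent : (Real.pi : ℂ) * Complex.I / 4 * ∑ i, ∑ j, (k i : ℂ) * τ i j * (k j : ℂ)
        + (Real.pi : ℂ) * Complex.I / 2 * ∑ i, (k i : ℂ) * (b i : ℂ)
      = Complex.I * (((Real.pi / 4 : ℝ) : ℂ) *
          ∑ i, ∑ j, ((k i * k j : ℝ) : ℂ) * τ i j
        + ((Real.pi / 2 * ∑ i, (k i : ℝ) * (b i : ℝ) : ℝ) : ℂ)) := by
    simp only [Fin.sum_univ_two]
    push_cast
    ring
  rw [thetaTerm, h_exponent, Complex.norm_exp, Complex.I_mul_re, Complex.add_im,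
    Complex.im_ofReal_mul, Complex.ofReal_im]
  simp only [Fin.sum_univ_two, Complex.add_im, Complex.im_ofReal_mul]
  ring_nf

lemma exists_mul_sum_sq_le_of_posDef {M : Matrix (Fin 2) (Fin 2) ℝ} (hM : M.PosDef) :
    ∃ ε > 0, ∀ x : Fin 2 → ℝ, ε * (x 0 ^ 2 + x 1 ^ 2) ≤ ∑ i, ∑ j, x i * M i j * x j := by
  have h_symm : M 1 0 = M 0 1 := hM.isHermitian.apply 0 1
  have h00 : 0 < M 0 0 := hM.diag_pos
  have h11 : 0 < M 1 1 := hM.diag_pos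
  have h_det : 0 < M 0 0 * M 1 1 - M 0 1 * M 0 1 := by
    simpa only [Matrix.det_fin_two, h_symm] using hM.det_pos
  refine ⟨(M 0 0 * M 1 1 - M 0 1 * M 0 1) / (M 0 0 + M 1 1), by positivity, fun x => ?_⟩
  simp only [Fin.sum_univ_two, h_symm]
  rw [div_mul_eq_mul_div, div_le_iff₀ (by positivity)]
  nlinarith [sq_nonneg (M 0 0 * x 0 + M 0 1 * x 1), sq_nonneg (M 0 1 * x 0 + M 1 1 * x 1)]

lemma summable_exp_neg_mul_int_sq {ε : ℝ} (hε : 0 < ε) :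
    Summable fun n : ℤ => Real.exp (-(ε * (n : ℝ) ^ 2)) := by
  refine (summable_pow_mul_jacobiTheta₂_term_bound 0 (div_pos hε Real.pi_pos) 0).congr fun n => ?_
  simp only [pow_zero, one_mul, mul_zero, zero_mul, sub_zero]
  field_simp

lemma summable_exp_neg_quadForm {M : Matrix (Fin 2) (Fin 2) ℝ} (hM : M.PosDef) :
    Summable fun k : Fin 2 → ℤ => Real.exp (-∑ i, ∑ j, (k i : ℝ) * M i j * (k j : ℝ)) := by
  obtain ⟨ε, hε, h_le⟩ := exists_mul_sum_sq_le_of_posDef hM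
  have h_gauss := summable_exp_neg_mul_int_sq hε
  have h_prod : Summable fun k : Fin 2 → ℤ =>
      Real.exp (-(ε * (k 0 : ℝ) ^ 2)) * Real.exp (-(ε * (k 1 : ℝ) ^ 2)) :=
    (finTwoArrowEquiv ℤ).summable_iff.mpr <| h_gauss.mul_of_nonneg h_gauss
      (fun _ => (Real.exp_pos _).le) (fun _ => (Real.exp_pos _).le)
  refine h_prod.of_nonneg_of_le (fun _ => (Real.exp_pos _).le) fun k => ?_
  rw [← Real.exp_add, Real.exp_le_exp]
  linarith [h_le fun i => (k i : ℝ)]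

lemma two_nsmul_add_injective (a : Fin 2 → ℤ) :
    Function.Injective fun n : Fin 2 → ℤ => (2 : ℤ) • n + a := fun _ _ h =>
  smul_right_injective _ two_ne_zero (add_right_cancel h)

lemma summable_norm_thetaTerm {τ : Mat2} (hτ : (τ.map Complex.im).PosDef) (a b : Fin 2 → ℤ) :
    Summable fun n : Fin 2 → ℤ => ‖thetaTerm b τ ((2 : ℤ) • n + a)‖ := by
  have h_pos : ((Real.pi / 4) • τ.map Complex.im).PosDef := hτ.smul (by positivity)
  refine Summable.comp_injective (f := fun k => ‖thetaTerm b τ k‖) ?_ (two_nsmul_add_injective a)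
  refine (summable_exp_neg_quadForm h_pos).congr fun k => ?_
  simp only [norm_thetaTerm, Fin.sum_univ_two, Matrix.smul_apply, Matrix.map_apply, smul_eq_mul]
  ring_nf

/-- The change of variables `(n, m) = (k + l + c, k - l)`, where `c` is the parity of `n + m`. -/
def addSubEquiv (ι : Type*) :
    (ι → Fin 2) × (ι → ℤ) × (ι → ℤ) ≃ (ι → ℤ) × (ι → ℤ) where
  toFun x := (fun i => x.2.1 i + x.2.2 i + (x.1 i : ℤ), fun i => x.2.1 i - x.2.2 i)
  invFun y := (fun i => ⟨((y.1 i + y.2 i) % 2).toNat, by omega⟩,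
    fun i => (y.1 i + y.2 i) / 2, fun i => (y.1 i - y.2 i) / 2)
  left_inv x := by
    ext i
    all_goals simp only; omega
  right_inv y := by
    ext i
    all_goals simp only; omega

lemma thetaTerm_add_mul_thetaTerm_sub (b : Fin 2 → ℤ) (τ : Mat2) (p q : Fin 2 → ℤ) :
    thetaTerm b τ (p + q) * thetaTerm b τ (p - q) =
      (-1) ^ (∑ i, p i * b i) *
        (thetaTerm 0 ((2 : ℂ) • τ) p * thetaTerm 0 ((2 : ℂ) • τ) q) := by
  rw [← Complex.exp_pi_mul_I, ← Complex.exp_int_mul]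
  simp only [thetaTerm, ← Complex.exp_add]
  refine congrArg Complex.exp ?_
  simp only [Fin.sum_univ_two, Pi.add_apply, Pi.sub_apply, Pi.zero_apply, Matrix.smul_apply,
    smul_eq_mul]
  push_cast
  ring

lemma neg_one_zpow_two_mul_add (m n : ℤ) : (-1 : ℂ) ^ (2 * m + n) = (-1) ^ n := by
  rw [zpow_add₀ (by norm_num), zpow_mul, show (-1 : ℂ) ^ (2 : ℤ) = 1 from by norm_num, one_zpow,
    one_mul]

lemma thetaTerm_addSubEquiv (a b : Fin 2 → ℤ) (τ : Mat2) (c : Fin 2 → Fin 2)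
    (k l : Fin 2 → ℤ) :
    thetaTerm b τ ((2 : ℤ) • (addSubEquiv (Fin 2) (c, k, l)).1 + a) *
        thetaTerm b τ ((2 : ℤ) • (addSubEquiv (Fin 2) (c, k, l)).2 + a) =
      (-1) ^ (∑ i, ((c i : ℤ) + a i) * b i) *
        (thetaTerm 0 ((2 : ℂ) • τ) ((2 : ℤ) • k + fun i => (c i : ℤ) + a i) *
          thetaTerm 0 ((2 : ℂ) • τ) ((2 : ℤ) • l + fun i => (c i : ℤ))) := by
  have h_sign : ∑ i, ((2 : ℤ) • k + fun i => (c i : ℤ) + a i) i * b i =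
      2 * (∑ i, k i * b i) + ∑ i, ((c i : ℤ) + a i) * b i := by
    rw [Finset.mul_sum, ← Finset.sum_add_distrib]
    refine Finset.sum_congr rfl fun i _ => ?_
    simp only [Pi.add_apply, Pi.smul_apply, smul_eq_mul]
    ring
  rw [← neg_one_zpow_two_mul_add (∑ i, k i * b i), ← h_sign, ← thetaTerm_add_mul_thetaTerm_sub]
  congr 2 <;>
  · funext i
    simp only [addSubEquiv, Equiv.coe_fn_mk, Pi.add_apply, Pi.sub_apply, Pi.smul_apply, smul_eq_mul]
    ring

theorem theta_sq_eq_sum_mul_Θf {τ : Mat2} (hτ : (τ.map Complex.im).PosDef) (a b : Fin 2 → ℤ) :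
    theta (a, b) τ ^ 2 = ∑ c : Fin 2 → Fin 2, (-1) ^ (∑ i, ((c i : ℤ) + a i) * b i) *
      (Θf (fun i => (c i : ℤ) + a i) τ * Θf (fun i => (c i : ℤ)) τ) := by
  have h_two : (((2 : ℂ) • τ).map Complex.im).PosDef := by
    convert hτ.smul (show (0 : ℝ) < 2 from two_pos) using 1
    ext i j
    simp
  have h_summable := summable_norm_thetaTerm hτ a b
  have h_summable_mul := (addSubEquiv (Fin 2)).summable_iff.mpr
    (summable_mul_of_summable_norm h_summable h_summable)
  rw [theta_eq_tsum_thetaTerm, sq, tsum_mul_tsum_of_summable_norm h_summable h_summable,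
    ← (addSubEquiv (Fin 2)).tsum_eq]
  refine h_summable_mul.tsum_prod.trans ?_
  rw [tsum_fintype]
  refine Finset.sum_congr rfl fun c _ => ?_
  rw [Θf_eq_tsum_thetaTerm, Θf_eq_tsum_thetaTerm, tsum_mul_tsum_of_summable_norm
    (summable_norm_thetaTerm h_two _ 0) (summable_norm_thetaTerm h_two _ 0), ← tsum_mul_left]
  exact tsum_congr fun x => thetaTerm_addSubEquiv a b τ c x.1 x.2

/-! ### The fourth powers of the even theta constants -/

/-- The fourth powers `θ⁴[δ]` of the ten even theta constants. -/
noncomputable def thetaFourth (i : Fin 10) (τ : SiegelH2) : ℂ := theta (δev i) τ ^ 4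

/-- The five linear combinations of `P₀, …, P₄` in which every `θ⁴[δ]` has coefficients `±1`
(see `frameSign`). -/
noncomputable def frameCoord (a : Fin 5) (τ : SiegelH2) : ℂ :=
  ![P4 τ + (-P0 τ + P1 τ + P2 τ + P3 τ) / 2, P4 τ + (-P0 τ + P1 τ - P2 τ - P3 τ) / 2,
    P4 τ + (-P0 τ - P1 τ + P2 τ - P3 τ) / 2, P4 τ + (-P0 τ - P1 τ - P2 τ + P3 τ) / 2,
    2 * P4 τ] a

/-- The coefficient of the frame coordinate `a` in `θ⁴[δᵢ]`. Completed by minus its sum, each row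
becomes a vector with three entries `1` and three entries `-1`, and the ten rows are, up to sign,
the ten splittings of six objects into two triples. -/
def frameSign : Matrix (Fin 10) (Fin 5) ℤ :=
  !![1, -1, -1, -1, 1;
    -1, -1, 1, -1, 1;
    -1, 1, -1, -1, 1;
    -1, -1, -1, 1, 1;
    1, 1, -1, -1, 1;
    1, 1, -1, -1, -1;
    1, -1, 1, -1, 1;
    1, -1, 1, -1, -1;
    1, -1, -1, 1, 1;
    1, -1, -1, 1, -1]

/-- The squares of the ten even theta constants, as quadratic forms in the second order theta
constants `Θ[00], Θ[01], Θ[10], Θ[11]`. -/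
def thetaSqForm (u v w x : ℂ) : Fin 10 → ℂ :=
  ![u ^ 2 + v ^ 2 + w ^ 2 + x ^ 2, u ^ 2 - v ^ 2 + w ^ 2 - x ^ 2,
    u ^ 2 + v ^ 2 - w ^ 2 - x ^ 2, u ^ 2 - v ^ 2 - w ^ 2 + x ^ 2,
    2 * (u * v + w * x), 2 * (u * v - w * x),
    2 * (u * w + v * x), 2 * (u * w - v * x),
    2 * (u * x + v * w), 2 * (u * x - v * w)]

lemma theta_vec_sq {τ : Mat2} (hτ : τ ∈ SiegelH2) (a₀ a₁ b₀ b₁ : ℤ) :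
    theta (![a₀, a₁], ![b₀, b₁]) τ ^ 2 =
      (-1) ^ (a₀ * b₀ + a₁ * b₁) * (Θf ![a₀, a₁] τ * Θf ![0, 0] τ) +
      (-1) ^ (a₀ * b₀ + (1 + a₁) * b₁) * (Θf ![a₀, 1 + a₁] τ * Θf ![0, 1] τ) +
      ((-1) ^ ((1 + a₀) * b₀ + a₁ * b₁) * (Θf ![1 + a₀, a₁] τ * Θf ![1, 0] τ) +
      (-1) ^ ((1 + a₀) * b₀ + (1 + a₁) * b₁) * (Θf ![1 + a₀, 1 + a₁] τ * Θf ![1, 1] τ)) := by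
  have h_parity (x y : Fin 2) : (fun i => ((![x, y] i : Fin 2) : ℤ)) = ![(x : ℤ), (y : ℤ)] := by
    ext i; fin_cases i <;> rfl
  have h_shift (x y : Fin 2) : (fun i => ((![x, y] i : Fin 2) : ℤ) + ![a₀, a₁] i) =
      ![(x : ℤ) + a₀, (y : ℤ) + a₁] := by
    ext i; fin_cases i <;> rfl
  rw [theta_sq_eq_sum_mul_Θf hτ.2, ← (finTwoArrowEquiv (Fin 2)).symm.sum_comp,
    Fintype.sum_prod_type]
  simp only [finTwoArrowEquiv_symm_apply, h_parity, h_shift]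
  simp

lemma theta_δev_sq (τ : SiegelH2) (i : Fin 10) :
    theta (δev i) τ ^ 2 =
      thetaSqForm (Θf ![0, 0] τ) (Θf ![0, 1] τ) (Θf ![1, 0] τ) (Θf ![1, 1] τ) i := by
  have h20 : Θf ![2, 0] τ = Θf ![0, 0] τ := Θf_congr_of_modEq (by decide) τ
  have h02 : Θf ![0, 2] τ = Θf ![0, 0] τ := Θf_congr_of_modEq (by decide) τ
  have h22 : Θf ![2, 2] τ = Θf ![0, 0] τ := Θf_congr_of_modEq (by decide) τ
  have h21 : Θf ![2, 1] τ = Θf ![0, 1] τ := Θf_congr_of_modEq (by decide) τ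
  have h12 : Θf ![1, 2] τ = Θf ![1, 0] τ := Θf_congr_of_modEq (by decide) τ
  have h_three : (-1 : ℂ) ^ (3 : ℤ) = -1 := by norm_num
  have h_four : (-1 : ℂ) ^ (4 : ℤ) = 1 := by norm_num
  have h_two : (-1 : ℂ) ^ (2 : ℤ) = 1 := by norm_num
  fin_cases i <;>
  · refine (theta_vec_sq τ.2 _ _ _ _).trans ?_
    simp only [thetaSqForm, Fin.zero_eta, Fin.mk_one, Fin.reduceFinMk, Matrix.cons_val, mul_zero,
      mul_one, add_zero, zero_add, Int.reduceAdd, zpow_zero, zpow_one, h20, h02, h22, h21, h12,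
      h_two, h_three, h_four]
    ring

lemma thetaFourth_eq_sum (i : Fin 10) :
    thetaFourth i = ∑ a, (frameSign i a : ℂ) • frameCoord a := by
  funext τ
  rw [thetaFourth, pow_mul _ 2 2, theta_δev_sq, Finset.sum_apply]
  fin_cases i <;>
  · simp only [thetaSqForm, frameSign, frameCoord, P0, P1, P2, P3, P4, Fin.sum_univ_five,
      Fin.zero_eta, Fin.mk_one, Fin.reduceFinMk, Matrix.of_apply, Matrix.cons_val, Pi.smul_apply,
      smul_eq_mul, Int.cast_neg, Int.cast_one]
    ring

/-! ### Behaviour at a cusp -/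

/-- The purely imaginary point `(2iT/π) S`, scaled so that the terms of the second order theta
constants are `exp(-T kᵀSk)`. -/
noncomputable def imagPoint (S : Matrix (Fin 2) (Fin 2) ℝ) (T : ℝ) : Mat2 :=
  (((2 / Real.pi * T : ℝ) : ℂ) * Complex.I) • S.map Complex.ofReal

lemma imagPoint_mem_SiegelH2 {S : Matrix (Fin 2) (Fin 2) ℝ} (hS : S.PosDef) {T : ℝ} (hT : 0 < T) :
    imagPoint S T ∈ SiegelH2 := by
  have h_im : (imagPoint S T).map Complex.im = (2 / Real.pi * T) • S := by
    ext i j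
    simp only [imagPoint, Matrix.map_apply, Matrix.smul_apply, smul_eq_mul, mul_assoc,
      Complex.im_ofReal_mul, Complex.I_mul_im, Complex.ofReal_re]
  have h_symm : S.transpose = S := by
    simpa only [Matrix.conjTranspose_eq_transpose_of_trivial] using hS.isHermitian.eq
  refine ⟨?_, h_im ▸ hS.smul (by positivity)⟩
  rw [imagPoint, Matrix.transpose_smul, ← Matrix.transpose_map, h_symm]

lemma thetaTerm_two_smul_imagPoint (S : Matrix (Fin 2) (Fin 2) ℝ) (T : ℝ) (k : Fin 2 → ℤ) :
    thetaTerm 0 ((2 : ℂ) • imagPoint S T) k =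
      (Real.exp (-(T * ∑ i, ∑ j, (k i : ℝ) * S i j * (k j : ℝ))) : ℝ) := by
  have h_pi : (Real.pi : ℂ) ≠ 0 := Complex.ofReal_ne_zero.mpr Real.pi_ne_zero
  rw [Complex.ofReal_exp]
  refine congrArg Complex.exp ?_
  simp only [imagPoint, Fin.sum_univ_two, Matrix.smul_apply, Matrix.map_apply, smul_eq_mul,
    Pi.zero_apply, Int.cast_zero, mul_zero, add_zero]
  push_cast
  field_simp
  rw [Complex.I_sq]
  ring

open Asymptotics Filter in
lemma isTheta_Θf_imagPoint {S : Matrix (Fin 2) (Fin 2) ℝ} (hS : S.PosDef) {ε : Fin 2 → ℤ}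
    {m : ℝ} (hm : IsLeast (Set.range fun n : Fin 2 → ℤ =>
      ∑ i, ∑ j, (((2 : ℤ) • n + ε) i : ℝ) * S i j * (((2 : ℤ) • n + ε) j : ℝ)) m) :
    (fun T => Θf ε (imagPoint S T)) =Θ[atTop] fun T => Real.exp (-(T * m)) := by
  obtain ⟨⟨n₀, rfl⟩, h_le⟩ := hm
  have h_summable := (summable_exp_neg_quadForm hS).comp_injective (two_nsmul_add_injective ε)
  have h_theta := isTheta_tsum_exp_neg_mul h_summable (i₀ := n₀) fun n => h_le ⟨n, rfl⟩
  refine (IsTheta.of_norm_eventuallyEq_norm (.of_forall fun T => ?_)).trans h_theta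
  simp only [Θf_eq_tsum_thetaTerm, thetaTerm_two_smul_imagPoint, ← Complex.ofReal_tsum,
    Complex.norm_real]

/-- The matrix of the form `15x² + 4y² + (x + y)²`. Its minima `0, 5, 16, 19` on the four classes of
`ℤ²` mod `2` are the leading exponents of the second order theta constants. -/
def cuspForm : Matrix (Fin 2) (Fin 2) ℝ := !![16, 1; 1, 5]

lemma sum_mul_cuspForm_mul (x : Fin 2 → ℝ) :
    ∑ i, ∑ j, x i * cuspForm i j * x j = 15 * x 0 ^ 2 + 4 * x 1 ^ 2 + (x 0 + x 1) ^ 2 := by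
  simp only [Fin.sum_univ_two, cuspForm, Matrix.of_apply, Matrix.cons_val', Matrix.cons_val_zero,
    Matrix.cons_val_one, Matrix.cons_val_fin_one]
  ring

lemma posDef_cuspForm : cuspForm.PosDef := by
  refine Matrix.PosDef.of_dotProduct_mulVec_pos ?_ fun x hx => ?_
  · ext i j
    fin_cases i <;> fin_cases j <;> rfl
  · have h_form : star x ⬝ᵥ cuspForm.mulVec x = ∑ i, ∑ j, x i * cuspForm i j * x j := by
      simp only [dotProduct, Matrix.mulVec, Finset.mul_sum, star_trivial, mul_assoc]
    rw [h_form, sum_mul_cuspForm_mul]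
    by_contra! h
    refine hx (funext (Fin.forall_fin_two.mpr ⟨?_, ?_⟩))
    · exact sq_nonpos_iff _ |>.mp (by nlinarith [sq_nonneg (x 1), sq_nonneg (x 0 + x 1)])
    · exact sq_nonpos_iff _ |>.mp (by nlinarith [sq_nonneg (x 0), sq_nonneg (x 0 + x 1)])

/-- A sequence of points of the Siegel upper half space tending to a cusp. -/
noncomputable def cuspPoint (n : ℕ) : SiegelH2 :=
  ⟨imagPoint cuspForm (n + 1), imagPoint_mem_SiegelH2 posDef_cuspForm (by positivity)⟩

/-- The local parameter along `cuspPoint`. -/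
noncomputable def cuspParam (n : ℕ) : ℝ := Real.exp (-(n + 1))

open Filter Topology in
lemma tendsto_cuspParam : Tendsto cuspParam atTop (𝓝[≠] 0) := by
  refine tendsto_nhdsWithin_iff.mpr ⟨?_, .of_forall fun n => (Real.exp_pos _).ne'⟩
  exact Real.tendsto_exp_neg_atTop_nhds_zero.comp
    (tendsto_atTop_add_const_right _ _ tendsto_natCast_atTop_atTop)

open Asymptotics Filter in
lemma isTheta_Θf_cuspPoint {ε : Fin 2 → ℤ} (n₀ : Fin 2 → ℤ) {m : ℕ}
    (h_eq : 15 * (2 * n₀ 0 + ε 0) ^ 2 + 4 * (2 * n₀ 1 + ε 1) ^ 2 +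
      (2 * n₀ 0 + ε 0 + (2 * n₀ 1 + ε 1)) ^ 2 = m)
    (h_le : ∀ a b : ℤ, m ≤ 15 * (2 * a + ε 0) ^ 2 + 4 * (2 * b + ε 1) ^ 2 +
      (2 * a + ε 0 + (2 * b + ε 1)) ^ 2) :
    (fun n => Θf ε (cuspPoint n)) =Θ[atTop] fun n => cuspParam n ^ m := by
  have h_least : IsLeast (Set.range fun n : Fin 2 → ℤ => ∑ i, ∑ j,
      (((2 : ℤ) • n + ε) i : ℝ) * cuspForm i j * (((2 : ℤ) • n + ε) j : ℝ)) m := by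
    constructor
    · refine ⟨n₀, (sum_mul_cuspForm_mul fun i => (((2 : ℤ) • n₀ + ε) i : ℝ)).trans ?_⟩
      exact_mod_cast h_eq
    · rintro _ ⟨n, rfl⟩
      refine le_of_le_of_eq ?_ (sum_mul_cuspForm_mul fun i => (((2 : ℤ) • n + ε) i : ℝ)).symm
      exact_mod_cast h_le (n 0) (n 1)
  have h_atTop : Tendsto (fun n : ℕ => (n : ℝ) + 1) atTop atTop :=
    tendsto_atTop_add_const_right _ _ tendsto_natCast_atTop_atTop
  have h_param (n : ℕ) : Real.exp (-((n + 1 : ℝ) * m)) = cuspParam n ^ m := by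
    rw [cuspParam, ← Real.exp_nat_mul]
    ring_nf
  have h_theta := isTheta_Θf_imagPoint posDef_cuspForm h_least
  simp only [← h_param]
  exact ⟨h_theta.1.comp_tendsto h_atTop, h_theta.2.comp_tendsto h_atTop⟩

lemma one_le_sq_of_odd {n : ℤ} (hn : Odd n) : 1 ≤ n ^ 2 :=
  (one_le_sq_iff_one_le_abs n).mpr (Int.one_le_abs (by rintro rfl; exact absurd hn (by decide)))

section Cusp

open Asymptotics Filter

lemma isTheta_Θf_zero_zero :
    (fun n => Θf ![0, 0] (cuspPoint n)) =Θ[atTop] fun n => cuspParam n ^ 0 :=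
  isTheta_Θf_cuspPoint 0 (by rfl) fun a b => by dsimp; positivity

lemma isTheta_Θf_zero_one :
    (fun n => Θf ![0, 1] (cuspPoint n)) =Θ[atTop] fun n => cuspParam n ^ 5 :=
  isTheta_Θf_cuspPoint 0 (by rfl) fun a b => by
    dsimp
    nlinarith [one_le_sq_of_odd (n := 2 * b + 1) ⟨b, rfl⟩, sq_nonneg (2 * a + 0)]

lemma isTheta_Θf_one_zero :
    (fun n => Θf ![1, 0] (cuspPoint n)) =Θ[atTop] fun n => cuspParam n ^ 16 :=
  isTheta_Θf_cuspPoint 0 (by rfl) fun a b => by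
    dsimp
    nlinarith [one_le_sq_of_odd (n := 2 * a + 1) ⟨a, rfl⟩,
      one_le_sq_of_odd (n := 2 * a + 1 + (2 * b + 0)) ⟨a + b, by ring⟩, sq_nonneg (2 * b + 0)]

lemma isTheta_Θf_one_one :
    (fun n => Θf ![1, 1] (cuspPoint n)) =Θ[atTop] fun n => cuspParam n ^ 19 :=
  isTheta_Θf_cuspPoint ![0, -1] (by rfl) fun a b => by
    dsimp
    nlinarith [one_le_sq_of_odd (n := 2 * a + 1) ⟨a, rfl⟩,
      one_le_sq_of_odd (n := 2 * b + 1) ⟨b, rfl⟩, sq_nonneg (2 * a + 1 + (2 * b + 1))]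

/-- The orders of vanishing of `P₀, …, P₄` along `cuspPoint`. -/
def cuspOrder : Fin 5 → ℕ := ![0, 10, 32, 38, 40]

lemma isTheta_Pv_cuspPoint (a : Fin 5) :
    (fun n => Pv a (cuspPoint n)) =Θ[atTop] fun n => cuspParam n ^ cuspOrder a := by
  have h00 := isTheta_Θf_zero_zero
  have h01 := isTheta_Θf_zero_one
  have h10 := isTheta_Θf_one_zero
  have h11 := isTheta_Θf_one_one
  have hq := tendsto_nhds_of_tendsto_nhdsWithin tendsto_cuspParam
  have h_sq_mul_sq {f g : ℕ → ℂ} {m n : ℕ} (hf : f =Θ[atTop] fun x => cuspParam x ^ m)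
      (hg : g =Θ[atTop] fun x => cuspParam x ^ n) :=
    isTheta_mul_pow (isTheta_pow_pow hf 2) (isTheta_pow_pow hg 2)
  fin_cases a
  · exact isTheta_add_of_isBigO_pow hq (isTheta_add_of_isBigO_pow hq (isTheta_add_of_isBigO_pow hq
      (isTheta_pow_pow h00 4) (isTheta_pow_pow h01 4).isBigO (by decide))
      (isTheta_pow_pow h10 4).isBigO (by decide)) (isTheta_pow_pow h11 4).isBigO (by decide)
  · exact (isTheta_const_mul_left two_ne_zero).mpr <| isTheta_add_of_isBigO_pow hq
      (h_sq_mul_sq h00 h01) (h_sq_mul_sq h10 h11).isBigO (by decide)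
  · exact (isTheta_const_mul_left two_ne_zero).mpr <| isTheta_add_of_isBigO_pow hq
      (h_sq_mul_sq h00 h10) (h_sq_mul_sq h01 h11).isBigO (by decide)
  · exact (isTheta_const_mul_left two_ne_zero).mpr <| isTheta_add_of_isBigO_pow hq
      (h_sq_mul_sq h00 h11) (h_sq_mul_sq h01 h10).isBigO (by decide)
  · exact (isTheta_const_mul_left (by norm_num : (4 : ℂ) ≠ 0)).mpr <|
      isTheta_mul_pow (isTheta_mul_pow (isTheta_mul_pow h00 h01) h10) h11

/-- The cubic monomials in `P₀, …, P₄`, with `P₁P₂P₃` replaced by `2P₁P₂P₃ - P₀P₄²`: both `P₁P₂P₃`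
and `P₀P₄²` vanish to order `80` along `cuspPoint`, but their leading terms cancel in this
combination. -/
noncomputable def cubicForm (s : Sym (Fin 5) 3) (τ : SiegelH2) : ℂ :=
  if (s : Multiset (Fin 5)) = {1, 2, 3} then 2 * (P1 τ * P2 τ * P3 τ) - P0 τ * P4 τ ^ 2
  else ((s : Multiset (Fin 5)).map fun a => Pv a τ).prod

/-- The order of vanishing of `cubicForm` along `cuspPoint`. -/
def cubicOrder (s : Sym (Fin 5) 3) : ℕ :=
  if (s : Multiset (Fin 5)) = {1, 2, 3} then 84
  else ((s : Multiset (Fin 5)).map cuspOrder).sum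

set_option maxRecDepth 100000 in
lemma cubicOrder_injective : Function.Injective cubicOrder := by
  decide

lemma igusa_quartic (τ : Mat2) :
    (2 * (P1 τ * P2 τ * P3 τ) - P0 τ * P4 τ ^ 2) * P0 τ =
      P1 τ ^ 2 * P2 τ ^ 2 + P1 τ ^ 2 * P3 τ ^ 2 + P2 τ ^ 2 * P3 τ ^ 2 + P4 τ ^ 4 -
        P4 τ ^ 2 * P1 τ ^ 2 - P4 τ ^ 2 * P2 τ ^ 2 - P4 τ ^ 2 * P3 τ ^ 2 := by
  simp only [P0, P1, P2, P3, P4]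
  ring

lemma isTheta_two_mul_P1_P2_P3_sub_cuspPoint :
    (fun n => 2 * (P1 (cuspPoint n) * P2 (cuspPoint n) * P3 (cuspPoint n)) -
      P0 (cuspPoint n) * P4 (cuspPoint n) ^ 2) =Θ[atTop] fun n => cuspParam n ^ 84 := by
  have hq := tendsto_nhds_of_tendsto_nhdsWithin tendsto_cuspParam
  have h_sq_mul_sq (a b : Fin 5) := isTheta_mul_pow (isTheta_pow_pow (isTheta_Pv_cuspPoint a) 2)
    (isTheta_pow_pow (isTheta_Pv_cuspPoint b) 2)
  have h_P0 : (fun n => P0 (cuspPoint n)) =Θ[atTop] fun _ => (1 : ℂ) :=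
    (isTheta_Pv_cuspPoint 0).trans <| by
      simpa only [show cuspOrder 0 = 0 from rfl, pow_zero] using
        isTheta_const_const one_ne_zero one_ne_zero
  have h_quartic : (fun n => (2 * (P1 (cuspPoint n) * P2 (cuspPoint n) * P3 (cuspPoint n)) -
      P0 (cuspPoint n) * P4 (cuspPoint n) ^ 2) * P0 (cuspPoint n)) =Θ[atTop]
        fun n => cuspParam n ^ 84 := by
    simp only [igusa_quartic]
    simp only [sub_eq_add_neg]
    refine isTheta_add_of_isBigO_pow hq ?_ (h_sq_mul_sq 4 3).isBigO.neg_left (by decide)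
    refine isTheta_add_of_isBigO_pow hq ?_ (h_sq_mul_sq 4 2).isBigO.neg_left (by decide)
    refine isTheta_add_of_isBigO_pow hq ?_ (h_sq_mul_sq 4 1).isBigO.neg_left (by decide)
    refine isTheta_add_of_isBigO_pow hq ?_
      (isTheta_pow_pow (isTheta_Pv_cuspPoint 4) 4).isBigO (by decide)
    refine isTheta_add_of_isBigO_pow hq ?_ (h_sq_mul_sq 2 3).isBigO (by decide)
    exact isTheta_add_of_isBigO_pow hq (h_sq_mul_sq 1 2) (h_sq_mul_sq 1 3).isBigO (by decide)
  simpa only [mul_one] using ((isTheta_refl _ _).mul h_P0).symm.trans h_quartic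

lemma isTheta_cubicForm_cuspPoint (s : Sym (Fin 5) 3) :
    (fun n => cubicForm s (cuspPoint n)) =Θ[atTop] fun n => cuspParam n ^ cubicOrder s := by
  by_cases hs : (s : Multiset (Fin 5)) = {1, 2, 3}
  · simpa only [cubicForm, cubicOrder, if_pos hs] using isTheta_two_mul_P1_P2_P3_sub_cuspPoint
  · have h_pow (q : ℝ) : q ^ ((s : Multiset (Fin 5)).map cuspOrder).sum =
        ((s : Multiset (Fin 5)).map fun a => q ^ cuspOrder a).prod := by
      induction (s : Multiset (Fin 5)) using Multiset.induction_on <;> simp_all [pow_add]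
    simpa only [cubicForm, cubicOrder, if_neg hs, h_pow] using
      IsTheta.multisetProd fun a (_ : a ∈ (s : Multiset (Fin 5))) => isTheta_Pv_cuspPoint a

lemma linearIndependent_cubicForm : LinearIndependent ℂ cubicForm :=
  .of_comp (LinearMap.funLeft ℂ ℂ cuspPoint) <| linearIndependent_of_isTheta_pow tendsto_cuspParam
    cubicOrder_injective isTheta_cubicForm_cuspPoint

end Cusp

/-! ### The dimension count -/

lemma Pv_mem_span_frameCoord (a : Fin 5) :
    (fun τ : SiegelH2 => Pv a τ) ∈ Submodule.span ℂ (Set.range frameCoord) := by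
  refine Submodule.mem_span_range_iff_exists_fun ℂ |>.mpr
    ⟨(!![-1 / 2, -1 / 2, -1 / 2, -1 / 2, 1; 1 / 2, 1 / 2, -1 / 2, -1 / 2, 0;
      1 / 2, -1 / 2, 1 / 2, -1 / 2, 0; 1 / 2, -1 / 2, -1 / 2, 1 / 2, 0;
      0, 0, 0, 0, 1 / 2] : Matrix (Fin 5) (Fin 5) ℂ) a, funext fun τ => ?_⟩
  fin_cases a <;>
  · simp only [Fin.sum_univ_five, frameCoord, Pv, Fin.zero_eta, Fin.mk_one, Fin.reduceFinMk,
      Finset.sum_apply, Pi.smul_apply, smul_eq_mul, Matrix.of_apply, Matrix.cons_val]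
    ring

lemma cubicForm_mem_span_frameCoord_pow (s : Sym (Fin 5) 3) :
    cubicForm s ∈ Submodule.span ℂ (Set.range frameCoord) ^ 3 := by
  have h_prod (m : Multiset (Fin 5)) (hm : m.card = 3) :
      (m.map fun a (τ : SiegelH2) => Pv a τ).prod ∈
        Submodule.span ℂ (Set.range frameCoord) ^ 3 := by
    rw [← hm, ← Multiset.card_map (fun a (τ : SiegelH2) => Pv a τ) m]
    refine multiset_prod_mem_pow_card fun f hf => ?_
    obtain ⟨a, -, rfl⟩ := Multiset.mem_map.mp hf
    exact Pv_mem_span_frameCoord a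
  by_cases hs : (s : Multiset (Fin 5)) = {1, 2, 3}
  · convert sub_mem (Submodule.smul_mem _ (2 : ℂ) (h_prod {1, 2, 3} rfl)) (h_prod {0, 4, 4} rfl)
      using 1
    funext τ
    rw [cubicForm, if_pos hs]
    simp only [Pv, Matrix.cons_val, Multiset.insert_eq_cons, Multiset.map_cons,
      Multiset.map_singleton, Multiset.prod_cons, Multiset.prod_singleton, Pi.sub_apply,
      Pi.smul_apply, Pi.mul_apply, smul_eq_mul]
    ring
  · convert h_prod s s.2 using 1
    funext τ
    simp only [cubicForm, if_neg hs, Pi.multiset_prod_apply, Multiset.map_map, Function.comp_def]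

lemma thirty_five_le_finrank_span_frameCoord_pow :
    35 ≤ Module.finrank ℂ ↥(Submodule.span ℂ (Set.range frameCoord) ^ 3) := by
  have : FiniteDimensional ℂ ↥(Submodule.span ℂ (Set.range frameCoord) ^ 3) :=
    Module.Finite.iff_fg.mpr ((Submodule.fg_span (Set.finite_range _)).pow 3)
  have h_card : Fintype.card (Sym (Fin 5) 3) = 35 := by
    rw [Sym.card_sym_eq_multichoose, Fintype.card_fin, Nat.multichoose_eq]
    rfl
  rw [← h_card, ← finrank_span_eq_card linearIndependent_cubicForm]
  refine Submodule.finrank_mono (Submodule.span_le.mpr ?_)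
  rintro _ ⟨s, rfl⟩
  exact cubicForm_mem_span_frameCoord_pow s

open MvPolynomial in
/-- `θ⁴[δᵢ]` as a linear form in the frame coordinates. -/
noncomputable def frameForm (i : Fin 10) : MvPolynomial (Fin 5) ℂ :=
  ∑ a, (frameSign i a : ℂ) • X a

open MvPolynomial in
/-- The sum of the values of a polynomial at the five basis vectors and at minus their sum. -/
noncomputable def sixPointSum : MvPolynomial (Fin 5) ℂ →ₗ[ℂ] ℂ :=
  ∑ a, (aeval (Pi.single a 1)).toLinearMap + (aeval fun _ => -1).toLinearMap

lemma aeval_frameForm {A : Type*} [CommRing A] [Algebra ℂ A] (x : Fin 5 → A) (i : Fin 10) :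
    MvPolynomial.aeval x (frameForm i) = ∑ a, (frameSign i a : ℂ) • x a := by
  simp only [frameForm, map_sum, map_smul, MvPolynomial.aeval_X]

lemma sixPointSum_frameForm_mul_sq (i j : Fin 10) :
    sixPointSum (frameForm i * frameForm j ^ 2) = 0 := by
  have h_sq : ∀ (j : Fin 10) (a : Fin 5), frameSign j a ^ 2 = 1 := by decide
  have h_sum_sq : ∀ j : Fin 10, (∑ a, frameSign j a) ^ 2 = 1 := by decide
  have h_single (j : Fin 10) (a : Fin 5) :
      MvPolynomial.aeval (Pi.single a 1) (frameForm j) = (frameSign j a : ℂ) := by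
    rw [aeval_frameForm]
    simp [Pi.single_apply]
  have h_neg (j : Fin 10) :
      MvPolynomial.aeval (fun _ => -1) (frameForm j) = ((-∑ a, frameSign j a : ℤ) : ℂ) := by
    rw [aeval_frameForm]
    simp
  simp only [sixPointSum, LinearMap.add_apply, LinearMap.sum_apply, AlgHom.toLinearMap_apply,
    map_mul, map_pow, h_single, h_neg]
  exact_mod_cast (by simp only [neg_sq, h_sq, h_sum_sq, mul_one, add_neg_cancel] :
    ∑ a, frameSign i a * frameSign j a ^ 2 + (-∑ a, frameSign i a) * (-∑ a, frameSign j a) ^ 2 = 0)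

lemma sixPointSum_X_zero_mul_X_one_sq :
    sixPointSum (MvPolynomial.X 0 * MvPolynomial.X 1 ^ 2) = -1 := by
  simp [sixPointSum, Fin.sum_univ_five]

lemma finrank_span_thetaFourth_mul_sq_lt :
    Module.finrank ℂ ↥(Submodule.span ℂ
      (Set.range fun p : Fin 10 × Fin 10 => thetaFourth p.1 * thetaFourth p.2 ^ 2)) < 35 := by
  have h_hom (i : Fin 10) : (frameForm i).IsHomogeneous 1 :=
    Submodule.sum_mem (MvPolynomial.homogeneousSubmodule (Fin 5) ℂ 1) fun a _ =>
      Submodule.smul_mem _ _ (MvPolynomial.isHomogeneous_X ℂ a)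
  have h_aeval (i : Fin 10) : MvPolynomial.aeval frameCoord (frameForm i) = thetaFourth i :=
    (aeval_frameForm frameCoord i).trans (thetaFourth_eq_sum i).symm
  have h_multichoose : (Fintype.card (Fin 5)).multichoose (1 + 1 * 2) = 35 := by
    rw [Fintype.card_fin, Nat.multichoose_eq]
    rfl
  have h_lt := finrank_span_range_aeval_lt frameCoord
    (F := fun p : Fin 10 × Fin 10 => frameForm p.1 * frameForm p.2 ^ 2)
    (fun p => (h_hom p.1).mul ((h_hom p.2).pow 2))
    (fun p => sixPointSum_frameForm_mul_sq p.1 p.2)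
    ((MvPolynomial.isHomogeneous_X _ _).mul ((MvPolynomial.isHomogeneous_X _ _).pow 2))
    (sixPointSum_X_zero_mul_X_one_sq.trans_ne (neg_ne_zero.mpr one_ne_zero))
  have h_eq : (fun p : Fin 10 × Fin 10 =>
      MvPolynomial.aeval frameCoord (frameForm p.1 * frameForm p.2 ^ 2)) =
        fun p => thetaFourth p.1 * thetaFourth p.2 ^ 2 :=
    funext fun p => by rw [map_mul, map_pow, h_aeval, h_aeval]
  rwa [h_multichoose, h_eq] at h_lt

lemma frameCoord_mem_span_thetaFourth (c : Fin 5) :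
    frameCoord c ∈ Submodule.span ℂ (Set.range thetaFourth) := by
  have h_inv : ∀ c d : Fin 5, ∑ i, (frameSign i c + ∑ e, frameSign i e) * frameSign i d =
      if c = d then 12 else 0 := by decide
  have h_sum : (12 : ℂ) • frameCoord c =
      ∑ i, ((frameSign i c + ∑ e, frameSign i e : ℤ) : ℂ) • thetaFourth i := by
    simp only [thetaFourth_eq_sum, Finset.smul_sum, smul_smul]
    rw [Finset.sum_comm]
    simp only [← Finset.sum_smul, ← Int.cast_mul, ← Int.cast_sum, h_inv]
    simp
  rw [← Submodule.smul_mem_iff _ (by norm_num : (12 : ℂ) ≠ 0), h_sum]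
  exact Submodule.sum_mem _ fun i _ => Submodule.smul_mem _ _ (Submodule.subset_span ⟨i, rfl⟩)

lemma frameCoord_mul_sub_mem_span_thetaFourth_sq {a b : Fin 5} (hab : a ≠ b) :
    (4 : ℂ) • (frameCoord a * frameCoord b) - ∑ d, frameCoord d ^ 2 ∈
      Submodule.span ℂ (Set.range fun i => thetaFourth i ^ 2) := by
  let c (i : Fin 10) : ℤ :=
    frameSign i a * frameSign i b + (frameSign i a + frameSign i b) * ∑ e, frameSign i e - 1
  have h_inv (d e : Fin 5) : ∑ i, c i * (frameSign i d * frameSign i e) =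
      16 * ((if a = d then 1 else 0) * (if b = e then 1 else 0)) +
        16 * ((if b = d then 1 else 0) * (if a = e then 1 else 0)) -
        8 * (if d = e then 1 else 0) := by
    revert a b d e
    decide
  have h_sum : (8 : ℂ) • ((4 : ℂ) • (frameCoord a * frameCoord b) - ∑ d, frameCoord d ^ 2) =
      ∑ i, (c i : ℂ) • thetaFourth i ^ 2 := by
    simp only [thetaFourth_eq_sum, sum_smul_sum_smul_sq, ← Int.cast_mul, ← Int.cast_sum, h_inv]
    simp only [mul_ite, mul_one, mul_zero, Int.cast_sub, Int.cast_add, Int.cast_ite, Int.cast_ofNat,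
      Int.cast_zero, sub_smul, add_smul, ite_smul, zero_smul, Finset.sum_sub_distrib,
      Finset.sum_add_distrib, Finset.sum_ite_eq, Finset.mem_univ, if_true, ← pow_two,
      ← Finset.smul_sum, mul_comm (frameCoord b)]
    module
  rw [← Submodule.smul_mem_iff _ (by norm_num : (8 : ℂ) ≠ 0), h_sum]
  exact Submodule.sum_mem _ fun i _ => Submodule.smul_mem _ _ (Submodule.subset_span ⟨i, rfl⟩)

lemma exists_span_frameCoord_pow_le :
    ∃ r, Submodule.span ℂ (Set.range frameCoord) ^ 3 ≤
      Submodule.span ℂ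
        (Set.range fun p : Fin 10 × Fin 10 => thetaFourth p.1 * thetaFourth p.2 ^ 2) ⊔
        Submodule.span ℂ {r} := by
  have h_card : (Fintype.card (Fin 5) : ℂ) - 1 = 4 := by norm_num
  refine exists_span_range_pow_three_le_sup (by decide) (by norm_num) fun a b c hab => ?_
  have h_mem := Submodule.mul_mem_mul (frameCoord_mem_span_thetaFourth c)
    (frameCoord_mul_sub_mem_span_thetaFourth_sq hab)
  rw [Submodule.span_mul_span, ← Set.image2_mul, Set.image2_range] at h_mem
  rwa [h_card]

/-- the span of the hundred functions `θ⁴[δᵢ]θ⁸[δⱼ]` has dimension exactly 34. -/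
theorem statement16 :
    Module.finrank ℂ ↥(Submodule.span ℂ
      (Set.range fun p : Fin 10 × Fin 10 =>
        fun τ : SiegelH2 => theta (δev p.1) τ.1 ^ 4 * theta (δev p.2) τ.1 ^ 8)) = 34 := by
  have h_eq : (fun (p : Fin 10 × Fin 10) (τ : SiegelH2) =>
      theta (δev p.1) τ.1 ^ 4 * theta (δev p.2) τ.1 ^ 8) =
        fun p => thetaFourth p.1 * thetaFourth p.2 ^ 2 := by
    funext p τ
    simp only [Pi.mul_apply, Pi.pow_apply, thetaFourth, ← pow_mul]
  rw [h_eq]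
  refine le_antisymm (Nat.lt_succ_iff.mp finrank_span_thetaFourth_mul_sq_lt)
    (Nat.le_of_add_le_add_right (b := 1) ?_)
  obtain ⟨r, h_le⟩ := exists_span_frameCoord_pow_le
  have := FiniteDimensional.span_of_finite ℂ
    (Set.finite_range fun p : Fin 10 × Fin 10 => thetaFourth p.1 * thetaFourth p.2 ^ 2)
  have := FiniteDimensional.span_of_finite ℂ (Set.finite_singleton r)
  calc 34 + 1 ≤ Module.finrank ℂ ↥(Submodule.span ℂ (Set.range frameCoord) ^ 3) :=
        thirty_five_le_finrank_span_frameCoord_pow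
    _ ≤ _ := Submodule.finrank_mono h_le
    _ ≤ _ := Submodule.finrank_add_le_finrank_add_finrank _ _
    _ ≤ _ := Nat.add_le_add_left (finrank_span_le_card {r}) _

end TwoLoop
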